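/- arXiv:2102.13444 — 3 statements merged into one kernel-verified Lean document; each statement's English description precedes it below -/
import Mathlib

section
/- Let x₀ ∈ X and suppose the gradient errors satisfy ‖∇f_ℓ(x₀) − ∇m_ℓ(x₀)‖₂ ≤ κ̇·Δ for all ℓ = 1,…,k, for constants κ̇ > 0 and Δ > 0. Then the criticality measures satisfy |min{ω_m(x₀),1} − min{ω(x₀),1}| ≤ |ω_m(x₀) − ω(x₀)| ≤ √c·κ̇·Δ. (Corollary 6.4, the key estimate in Lemma 6.1: fully linear models yield criticality measures that agree up to O(Δ).) -/
noncomputable section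

/-- The ℓ^∞ (maximum) norm on Euclidean space. -/
def supNorm {n : ℕ} (v : EuclideanSpace ℝ (Fin n)) : ℝ :=
  ‖(WithLp.equiv 2 (Fin n → ℝ)) v‖

/-- The multiobjective criticality measure
`ω_g(x) = − inf { max_ℓ ⟨∇g_ℓ(x), d⟩ : x + d ∈ X, ‖d‖_∞ ≤ 1 }`. -/
def omega {n k : ℕ} (X : Set (EuclideanSpace ℝ (Fin n)))
    (g : Fin k → EuclideanSpace ℝ (Fin n) → ℝ) (x : EuclideanSpace ℝ (Fin n)) : ℝ :=
  - sInf ((fun d => ⨆ ℓ, fderiv ℝ (g ℓ) x d) ''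
      {d : EuclideanSpace ℝ (Fin n) | x + d ∈ X ∧ supNorm d ≤ 1})

/-- If the derivatives of `h` at `x` exceed those of `g` by at most `ε` in every direction admissible in
the definition of `omega`, and these directions are bounded, then `omega X g x` exceeds
`omega X h x` by at most `ε`. -/
lemma omega_le_omega_add {n k : ℕ} (hk : 1 ≤ k) {X : Set (EuclideanSpace ℝ (Fin n))}
    {g h : Fin k → EuclideanSpace ℝ (Fin n) → ℝ} {x : EuclideanSpace ℝ (Fin n)} (hx : x ∈ X)
    {r ε : ℝ} (hr : ∀ d : EuclideanSpace ℝ (Fin n), supNorm d ≤ 1 → ‖d‖ ≤ r)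
    (hgh : ∀ d : EuclideanSpace ℝ (Fin n), supNorm d ≤ 1 →
      ∀ ℓ, fderiv ℝ (h ℓ) x d ≤ fderiv ℝ (g ℓ) x d + ε) :
    omega X g x ≤ omega X h x + ε := by
  have : Nonempty (Fin k) := ⟨⟨0, hk⟩⟩
  have hbdd : BddBelow ((fun d => ⨆ ℓ, fderiv ℝ (h ℓ) x d) ''
      {d : EuclideanSpace ℝ (Fin n) | x + d ∈ X ∧ supNorm d ≤ 1}) := by
    refine ⟨-(‖fderiv ℝ (h ⟨0, hk⟩) x‖ * r), ?_⟩
    rintro _ ⟨d, ⟨-, hd⟩, rfl⟩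
    have hle : fderiv ℝ (h ⟨0, hk⟩) x d ≤ ⨆ ℓ, fderiv ℝ (h ℓ) x d :=
      le_ciSup (f := fun ℓ => fderiv ℝ (h ℓ) x d) (Set.finite_range _).bddAbove ⟨0, hk⟩
    have hop := (fderiv ℝ (h ⟨0, hk⟩) x).le_opNorm d
    have hmul := mul_le_mul_of_nonneg_left (hr d hd) (norm_nonneg (fderiv ℝ (h ⟨0, hk⟩) x))
    have habs := neg_abs_le (fderiv ℝ (h ⟨0, hk⟩) x d)
    rw [Real.norm_eq_abs] at hop
    change _ ≤ ⨆ ℓ, fderiv ℝ (h ℓ) x d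
    linarith
  have hinf : sInf ((fun d => ⨆ ℓ, fderiv ℝ (h ℓ) x d) ''
      {d : EuclideanSpace ℝ (Fin n) | x + d ∈ X ∧ supNorm d ≤ 1}) - ε ≤
      sInf ((fun d => ⨆ ℓ, fderiv ℝ (g ℓ) x d) ''
      {d : EuclideanSpace ℝ (Fin n) | x + d ∈ X ∧ supNorm d ≤ 1}) := by
    refine le_csInf ⟨_, 0, ⟨by simpa using hx, by simp [supNorm]⟩, rfl⟩ ?_
    rintro _ ⟨d, hd, rfl⟩
    rw [sub_le_iff_le_add]
    refine (csInf_le hbdd ⟨d, hd, rfl⟩).trans (ciSup_le fun ℓ => (hgh d hd.2 ℓ).trans ?_)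
    gcongr
    exact le_ciSup (f := fun ℓ => fderiv ℝ (g ℓ) x d) (Set.finite_range _).bddAbove ℓ
  unfold omega
  linarith

/-- Corollary 6.4: if the gradient errors satisfy
`‖∇f_ℓ(x₀) − ∇m_ℓ(x₀)‖₂ ≤ κ̇·Δ` for all `ℓ`, then the (truncated) criticality
measures agree up to `O(Δ)`:
`|min{ω_m(x₀),1} − min{ω(x₀),1}| ≤ |ω_m(x₀) − ω(x₀)| ≤ √c·κ̇·Δ`. -/
theorem criticality_measures_fully_linear
    (n k : ℕ) (hk : 1 ≤ k)
    (X : Set (EuclideanSpace ℝ (Fin n)))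
    (hXne : X.Nonempty) (hXconv : Convex ℝ X) (hXcomp : IsCompact X)
    (f m : Fin k → EuclideanSpace ℝ (Fin n) → ℝ)
    (U : Set (EuclideanSpace ℝ (Fin n))) (hUopen : IsOpen U) (hXU : X ⊆ U)
    (hf : ∀ ℓ, ContDiffOn ℝ 1 (f ℓ) U)
    (hm : ∀ ℓ, ContDiffOn ℝ 1 (m ℓ) U)
    (c : ℝ) (hc : 0 < c)
    (hcn : ∀ v : EuclideanSpace ℝ (Fin n), ‖v‖ ≤ Real.sqrt c * supNorm v)
    (x₀ : EuclideanSpace ℝ (Fin n)) (hx₀ : x₀ ∈ X)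
    (κdot Δ : ℝ) (hκdot : 0 < κdot) (hΔ : 0 < Δ)
    (herr : ∀ ℓ, ‖gradient (f ℓ) x₀ - gradient (m ℓ) x₀‖ ≤ κdot * Δ) :
    |min (omega X m x₀) 1 - min (omega X f x₀) 1| ≤ |omega X m x₀ - omega X f x₀|
    ∧ |omega X m x₀ - omega X f x₀| ≤ Real.sqrt c * κdot * Δ := by
  have hr : ∀ d : EuclideanSpace ℝ (Fin n), supNorm d ≤ 1 → ‖d‖ ≤ Real.sqrt c := fun d hd =>
    (hcn d).trans (mul_le_of_le_one_right (Real.sqrt_nonneg c) hd)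
  have hdiff : ∀ d : EuclideanSpace ℝ (Fin n), supNorm d ≤ 1 →
      ∀ ℓ, |fderiv ℝ (f ℓ) x₀ d - fderiv ℝ (m ℓ) x₀ d| ≤ Real.sqrt c * κdot * Δ := by
    intro d hd ℓ
    have hinner : fderiv ℝ (f ℓ) x₀ d - fderiv ℝ (m ℓ) x₀ d =
        inner ℝ (gradient (f ℓ) x₀ - gradient (m ℓ) x₀) d := by
      simp [gradient, inner_sub_left]
    calc |fderiv ℝ (f ℓ) x₀ d - fderiv ℝ (m ℓ) x₀ d|
        ≤ ‖gradient (f ℓ) x₀ - gradient (m ℓ) x₀‖ * ‖d‖ := hinner ▸ abs_real_inner_le_norm _ _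
      _ ≤ κdot * Δ * Real.sqrt c :=
        mul_le_mul (herr ℓ) (hr d hd) (norm_nonneg _) (by positivity)
      _ = Real.sqrt c * κdot * Δ := by ring
  refine ⟨by simpa using abs_min_sub_min_le_max (omega X m x₀) 1 (omega X f x₀) 1, ?_⟩
  have hmf : omega X m x₀ ≤ omega X f x₀ + Real.sqrt c * κdot * Δ :=
    omega_le_omega_add hk hx₀ hr fun d hd ℓ => by linarith [(abs_le.mp (hdiff d hd ℓ)).2]
  have hfm : omega X f x₀ ≤ omega X m x₀ + Real.sqrt c * κdot * Δ :=
    omega_le_omega_add hk hx₀ hr fun d hd ℓ => by linarith [(abs_le.mp (hdiff d hd ℓ)).1]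
  exact abs_le.mpr ⟨by linarith, by linarith⟩
end
end

section
/- Suppose: (i) the error bound |f_ℓ(y) − m_ℓ(y)| ≤ ε·Δ² holds for all ℓ = 1,…,k and all y ∈ B (full linearity), with ε > 0; (ii) a step s with x₀ + s ∈ B satisfies the sufficient decrease Φ_m(x₀) − Φ_m(x₀ + s) ≥ κ·ω̃_m·min{ ω̃_m/(c·H_ub), Δ } > 0, where ω̃_m := min{ω_m(x₀), 1} > 0, κ ∈ (0,1), and c·H_ub > 1; and (iii) Δ ≤ κ·(1 − ν)·ω̃_m/(2λ) with λ := max{ε, c·H_ub} and ν ∈ (0,1). Then the acceptance ratio ρ := (Φ(x₀) − Φ(x₀+s))/(Φ_m(x₀) − Φ_m(x₀+s)) satisfies |ρ − 1| ≤ 1 − ν, and in particular ρ ≥ ν. (Lemma 6.7: sufficiently small trust regions with fully linear models yield successful iterations.) -/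
noncomputable section

/-- Frobenius norm of the Hessian of `g : ℝⁿ → ℝ` at `x`. -/
def frobHess {n : ℕ} (g : EuclideanSpace ℝ (Fin n) → ℝ)
    (x : EuclideanSpace ℝ (Fin n)) : ℝ :=
  Real.sqrt (∑ i : Fin n, ∑ j : Fin n,
    (fderiv ℝ (fun y => fderiv ℝ g y (EuclideanSpace.single j (1:ℝ))) x
      (EuclideanSpace.single i (1:ℝ))) ^ 2)

/-- The maximum of finitely many reals is 1-Lipschitz in the sup distance. -/
theorem abs_ciSup_sub_ciSup_le {ι : Type*} [Finite ι] [Nonempty ι] {a b : ι → ℝ} {r : ℝ}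
    (h : ∀ i, |a i - b i| ≤ r) : |(⨆ i, a i) - ⨆ i, b i| ≤ r := by
  have key : ∀ u v : ι → ℝ, (∀ i, u i ≤ v i + r) → (⨆ i, u i) ≤ (⨆ i, v i) + r :=
    fun u v huv => ciSup_le fun i =>
      (huv i).trans (by gcongr; exact le_ciSup (Set.finite_range v).bddAbove i)
  rw [abs_sub_le_iff]
  constructor
  · linarith [key a b fun i => by linarith [(abs_sub_le_iff.1 (h i)).1]]
  · linarith [key b a fun i => by linarith [(abs_sub_le_iff.1 (h i)).2]]

/-- Lemma 6.7: with fully linear models, a sufficient decrease step, and a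
sufficiently small trust region radius, the acceptance ratio
`ρ = (Φ(x₀) − Φ(x₀+s)) / (Φ_m(x₀) − Φ_m(x₀+s))` satisfies `|ρ − 1| ≤ 1 − ν`,
in particular `ρ ≥ ν`, so the iteration is successful. -/
theorem small_radius_successful
    (n k : ℕ) (hk : 1 ≤ k)
    (X : Set (EuclideanSpace ℝ (Fin n)))
    (hXne : X.Nonempty) (hXconv : Convex ℝ X) (hXcomp : IsCompact X)
    (f m : Fin k → EuclideanSpace ℝ (Fin n) → ℝ)
    (U : Set (EuclideanSpace ℝ (Fin n))) (hUopen : IsOpen U) (hXU : X ⊆ U)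
    (hf : ∀ ℓ, ContDiffOn ℝ 1 (f ℓ) U)
    (hm : ∀ ℓ, ContDiffOn ℝ 2 (m ℓ) U)
    (x₀ : EuclideanSpace ℝ (Fin n)) (hx₀ : x₀ ∈ X)
    (Δ : ℝ) (hΔ : 0 < Δ)
    (B : Set (EuclideanSpace ℝ (Fin n))) (hB : B = {y ∈ X | supNorm (y - x₀) ≤ Δ})
    (c : ℝ) (hc : 0 < c)
    (hcn : ∀ v : EuclideanSpace ℝ (Fin n), ‖v‖ ≤ Real.sqrt c * supNorm v)
    (Hub : ℝ) (hHub : 0 < Hub)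
    (hHbound : ∀ ℓ, ∀ x ∈ B, frobHess (m ℓ) x ≤ Hub)
    (hcH : 1 < c * Hub)
    -- (i) full linearity: `|f_ℓ(y) − m_ℓ(y)| ≤ ε·Δ²` on `B`
    (ε : ℝ) (hε : 0 < ε)
    (hfl : ∀ ℓ, ∀ y ∈ B, |f ℓ y - m ℓ y| ≤ ε * Δ ^ 2)
    (ν : ℝ) (hν : ν ∈ Set.Ioo (0:ℝ) 1)
    (κ : ℝ) (hκ : κ ∈ Set.Ioo (0:ℝ) 1)
    (hωpos : 0 < min (omega X m x₀) 1)
    -- (ii) sufficient decrease, with positive right-hand side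
    (s : EuclideanSpace ℝ (Fin n)) (hs : x₀ + s ∈ B)
    (hdec : (⨆ ℓ, m ℓ x₀) - (⨆ ℓ, m ℓ (x₀ + s))
      ≥ κ * min (omega X m x₀) 1 *
        min (min (omega X m x₀) 1 / (c * Hub)) Δ)
    (hdecpos : 0 < κ * min (omega X m x₀) 1 *
        min (min (omega X m x₀) 1 / (c * Hub)) Δ)
    -- (iii) small trust region radius, with `λ = max{ε, c·Hub}`
    (hΔsmall : Δ ≤ κ * (1 - ν) * min (omega X m x₀) 1 / (2 * max ε (c * Hub))) :
    |((⨆ ℓ, f ℓ x₀) - (⨆ ℓ, f ℓ (x₀ + s))) /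
        ((⨆ ℓ, m ℓ x₀) - (⨆ ℓ, m ℓ (x₀ + s))) - 1| ≤ 1 - ν
    ∧ ν ≤ ((⨆ ℓ, f ℓ x₀) - (⨆ ℓ, f ℓ (x₀ + s))) /
        ((⨆ ℓ, m ℓ x₀) - (⨆ ℓ, m ℓ (x₀ + s))) := by
  obtain ⟨hν0, hν1⟩ := hν
  obtain ⟨hκ0, hκ1⟩ := hκ
  have : Nonempty (Fin k) := ⟨⟨0, hk⟩⟩
  have hx₀B : x₀ ∈ B := by
    rw [hB]
    exact ⟨hx₀, by simpa [supNorm] using hΔ.le⟩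
  have hΦ₀ := abs_ciSup_sub_ciSup_le fun ℓ => hfl ℓ x₀ hx₀B
  have hΦs := abs_ciSup_sub_ciSup_le fun ℓ => hfl ℓ (x₀ + s) hs
  generalize min (omega X m x₀) 1 = w at *
  have hL : 0 < max ε (c * Hub) := lt_max_of_lt_left hε
  rw [le_div_iff₀ (by positivity)] at hΔsmall
  have hεL : Δ * ε ≤ Δ * max ε (c * Hub) := by gcongr; exact le_max_left _ _
  have hHL : Δ * (c * Hub) ≤ Δ * max ε (c * Hub) := by gcongr; exact le_max_right _ _
  have hκν : κ * (1 - ν) ≤ 1 := mul_le_one₀ hκ1.le (by linarith) (by linarith)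
  have hκνw : κ * (1 - ν) * w ≤ w := mul_le_of_le_one_left hωpos.le hκν
  have hΔw : Δ ≤ w / (c * Hub) := by
    rw [le_div_iff₀ (by positivity)]
    linarith [mul_pos hΔ hL]
  rw [min_eq_right hΔw] at hdec hdecpos
  set D := (⨆ ℓ, m ℓ x₀) - ⨆ ℓ, m ℓ (x₀ + s)
  set N := (⨆ ℓ, f ℓ x₀) - ⨆ ℓ, f ℓ (x₀ + s)
  have hD : 0 < D := hdecpos.trans_le hdec
  have hND : |N - D| ≤ (1 - ν) * D := calc
    |N - D| = |((⨆ ℓ, f ℓ x₀) - ⨆ ℓ, m ℓ x₀)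
        - ((⨆ ℓ, f ℓ (x₀ + s)) - ⨆ ℓ, m ℓ (x₀ + s))| := by
      congr 1
      ring
    _ ≤ ε * Δ ^ 2 + ε * Δ ^ 2 := (abs_sub _ _).trans (add_le_add hΦ₀ hΦs)
    _ = 2 * (Δ * ε) * Δ := by ring
    _ ≤ κ * (1 - ν) * w * Δ :=
      mul_le_mul_of_nonneg_right (by linarith) hΔ.le
    _ = (1 - ν) * (κ * w * Δ) := by ring
    _ ≤ (1 - ν) * D := mul_le_mul_of_nonneg_left hdec (by linarith)
  have hρ : |N / D - 1| ≤ 1 - ν := by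
    rw [div_sub_one hD.ne', abs_div, abs_of_pos hD]
    exact (div_le_iff₀ hD).2 hND
  exact ⟨hρ, by linarith [(abs_le.1 hρ).1]⟩
end
end

section
/- Let x₀ ∈ X be non-Pareto-critical for the model, i.e. ω_m(x₀) > 0. Define the local model ideal point i ∈ ℝᵏ by i_ℓ := min_{x ∈ X} m_ℓ(x), the direction r := m(x₀) − i ∈ ℝᵏ (componentwise nonnegative), and assume min_ℓ r_ℓ / max_ℓ r_ℓ ≥ r̄ for a constant r̄ ∈ (0,1]. Let (τ⁺, x⁺) ∈ ℝ × B be a minimizer of τ over the Pascoletti–Serafini feasible set {(τ, x) : x ∈ B, m_ℓ(x₀) + τ·r_ℓ − m_ℓ(x) ≥ 0 for all ℓ}. Then Φ_m(x₀) − Φ_m(x⁺) ≥ (r̄/2)·ω_m(x₀)·min{ ω_m(x₀)/(c·H), Δ, 1 }. (Lemma B.1, using the strict Pareto-Cauchy bound with backtracking constants a = b = 1/2.) -/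
noncomputable section

open Set

/-- Second-order upper Taylor bound on `[0, t]` for a function whose second derivative is at
most `K`. -/
lemma le_taylor_of_second_deriv_le {φ φ₁ φ₂ : ℝ → ℝ} {t K : ℝ} (ht : 0 ≤ t)
    (h1 : ∀ s ∈ Icc 0 t, HasDerivAt φ (φ₁ s) s)
    (h2 : ∀ s ∈ Icc 0 t, HasDerivAt φ₁ (φ₂ s) s)
    (hK : ∀ s ∈ Icc 0 t, φ₂ s ≤ K) :
    φ t ≤ φ 0 + t * φ₁ 0 + K * t ^ 2 / 2 := by
  have hslope : ∀ s ∈ Icc 0 t, φ₁ s ≤ φ₁ 0 + K * s := by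
    refine image_le_of_deriv_right_le_deriv_boundary (f' := φ₂) (B' := fun _ => K)
      (fun s hs => (h2 s hs).continuousAt.continuousWithinAt)
      (fun s hs => (h2 s (Ico_subset_Icc_self hs)).hasDerivWithinAt) (by simp) (by fun_prop)
      (fun s _ => ?_) (fun s hs => hK s (Ico_subset_Icc_self hs))
    simpa using (((hasDerivAt_id s).const_mul K).const_add (φ₁ 0)).hasDerivWithinAt
  have hvalue : ∀ s ∈ Icc 0 t, φ s ≤ φ 0 + s * φ₁ 0 + K * s ^ 2 / 2 := by
    refine image_le_of_deriv_right_le_deriv_boundary (f' := φ₁) (B' := fun s => φ₁ 0 + K * s)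
      (fun s hs => (h1 s hs).continuousAt.continuousWithinAt)
      (fun s hs => (h1 s (Ico_subset_Icc_self hs)).hasDerivWithinAt) (by simp) (by fun_prop)
      (fun s _ => ?_) (fun s hs => hslope s (Ico_subset_Icc_self hs))
    have h := (((hasDerivAt_id s).mul_const (φ₁ 0)).const_add (φ 0)).add
      ((((hasDerivAt_id s).pow 2).const_mul K).div_const 2)
    refine (h.congr_deriv ?_).hasDerivWithinAt
    simp only [id]
    ring
  exact hvalue t ⟨ht, le_rfl⟩

/-- A bilinear form is bounded by the Frobenius norm of its matrix. -/
lemma bilin_apply_self_le_frobenius {n : ℕ}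
    (F : EuclideanSpace ℝ (Fin n) →L[ℝ] EuclideanSpace ℝ (Fin n) →L[ℝ] ℝ)
    (d : EuclideanSpace ℝ (Fin n)) :
    F d d ≤ Real.sqrt (∑ i : Fin n, ∑ j : Fin n,
      (F (EuclideanSpace.single i (1 : ℝ)) (EuclideanSpace.single j (1 : ℝ))) ^ 2)
        * ‖d‖ ^ 2 := by
  have hd : d = ∑ i, d i • EuclideanSpace.single i (1 : ℝ) := by
    simpa using ((EuclideanSpace.basisFun (Fin n) ℝ).sum_repr d).symm
  have hF : F d d = ∑ p : Fin n × Fin n,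
      F (EuclideanSpace.single p.1 (1 : ℝ)) (EuclideanSpace.single p.2 (1 : ℝ))
        * (d p.1 * d p.2) := by
    conv_lhs => rw [hd]
    simp only [map_sum, map_smul, sum_apply, smul_apply,
      smul_eq_mul, Fintype.sum_prod_type, Finset.mul_sum]
    rw [Finset.sum_comm]
    exact Finset.sum_congr rfl fun _ _ => Finset.sum_congr rfl fun _ _ => by ring
  have hnorm : ∑ p : Fin n × Fin n, (d p.1 * d p.2) ^ 2 = (‖d‖ ^ 2) ^ 2 := by
    rw [EuclideanSpace.real_norm_sq_eq, sq (∑ i, d i ^ 2), Finset.sum_mul_sum,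
      Fintype.sum_prod_type]
    simp only [mul_pow]
  have hCS := Real.sum_mul_le_sqrt_mul_sqrt Finset.univ
    (fun p : Fin n × Fin n =>
      F (EuclideanSpace.single p.1 (1 : ℝ)) (EuclideanSpace.single p.2 (1 : ℝ)))
    (fun p => d p.1 * d p.2)
  rwa [hnorm, Real.sqrt_sq (by positivity), ← hF, Fintype.sum_prod_type] at hCS

section Smooth

variable {n : ℕ} {g : EuclideanSpace ℝ (Fin n) → ℝ} {U : Set (EuclideanSpace ℝ (Fin n))}

lemma contDiffOn_fderiv_apply (hU : IsOpen U) (hg : ContDiffOn ℝ 2 g U)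
    (v : EuclideanSpace ℝ (Fin n)) : ContDiffOn ℝ 1 (fun y => fderiv ℝ g y v) U :=
  (hg.fderiv_of_isOpen hU (by norm_num)).clm_apply contDiffOn_const

lemma hasFDerivAt_fderiv_apply (hU : IsOpen U) (hg : ContDiffOn ℝ 2 g U)
    {x : EuclideanSpace ℝ (Fin n)} (hx : x ∈ U) (v : EuclideanSpace ℝ (Fin n)) :
    HasFDerivAt (fun y => fderiv ℝ g y v) ((fderiv ℝ (fderiv ℝ g) x).flip v) x := by
  have h : DifferentiableAt ℝ (fderiv ℝ g) x :=
    ((hg.fderiv_of_isOpen hU (m := 1) (by norm_num)).differentiableOn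
      (by norm_num)).differentiableAt (hU.mem_nhds hx)
  simpa using h.hasFDerivAt.clm_apply (hasFDerivAt_const v x)

lemma second_deriv_le_frobHess (hU : IsOpen U) (hg : ContDiffOn ℝ 2 g U)
    {x : EuclideanSpace ℝ (Fin n)} (hx : x ∈ U) (d : EuclideanSpace ℝ (Fin n)) :
    fderiv ℝ (fderiv ℝ g) x d d ≤ frobHess g x * ‖d‖ ^ 2 := by
  have h := bilin_apply_self_le_frobenius (fderiv ℝ (fderiv ℝ g) x) d
  simpa only [frobHess, (hasFDerivAt_fderiv_apply hU hg hx _).fderiv,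
    ContinuousLinearMap.flip_apply] using h

lemma continuousOn_frobHess (hU : IsOpen U) (hg : ContDiffOn ℝ 2 g U) :
    ContinuousOn (frobHess g) U := by
  refine Real.continuous_sqrt.comp_continuousOn ?_
  refine continuousOn_finsetSum _ fun i _ => continuousOn_finsetSum _ fun j _ => ?_
  exact (((contDiffOn_fderiv_apply hU hg _).continuousOn_fderiv_of_isOpen hU le_rfl).clm_apply
    continuousOn_const).pow 2

/-- Descent estimate along a ray on which the Hessian has Frobenius norm at most `H`. -/
lemma le_taylor_of_frobHess_le (hU : IsOpen U) (hg : ContDiffOn ℝ 2 g U)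
    {x d : EuclideanSpace ℝ (Fin n)} {t H : ℝ} (ht : 0 ≤ t)
    (hseg : ∀ s ∈ Icc 0 t, x + s • d ∈ U) (hH : ∀ s ∈ Icc 0 t, frobHess g (x + s • d) ≤ H) :
    g (x + t • d) ≤ g x + t * fderiv ℝ g x d + H * ‖d‖ ^ 2 * t ^ 2 / 2 := by
  have hline : ∀ s : ℝ, HasDerivAt (fun s : ℝ => x + s • d) d s := fun s => by
    simpa using ((hasDerivAt_id s).smul_const d).const_add x
  have h := le_taylor_of_second_deriv_le (φ := fun s => g (x + s • d))
    (φ₁ := fun s => fderiv ℝ g (x + s • d) d)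
    (φ₂ := fun s => fderiv ℝ (fderiv ℝ g) (x + s • d) d d) (K := H * ‖d‖ ^ 2) ht
    (fun s hs => ?_) (fun s hs => ?_) (fun s hs => ?_)
  · simpa using h
  · exact ((hg.differentiableOn (by norm_num)).differentiableAt
      (hU.mem_nhds (hseg s hs))).hasFDerivAt.comp_hasDerivAt s (hline s)
  · exact (hasFDerivAt_fderiv_apply hU hg (hseg s hs) d).comp_hasDerivAt s (hline s)
  · exact (second_deriv_le_frobHess hU hg (hseg s hs) d).trans
      (mul_le_mul_of_nonneg_right (hH s hs) (by positivity))

end Smooth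

lemma supNorm_smul {n : ℕ} (t : ℝ) (v : EuclideanSpace ℝ (Fin n)) :
    supNorm (t • v) = |t| * supNorm v := by
  simp [supNorm, norm_smul]

lemma continuous_supNorm {n : ℕ} : Continuous (supNorm (n := n)) :=
  (PiLp.continuous_ofLp 2 _).norm

/-- The criticality measure is attained: some admissible direction has slope at most `-ω` in
every component. -/
lemma exists_direction_fderiv_le_neg_omega {n k : ℕ} {X : Set (EuclideanSpace ℝ (Fin n))}
    (hX : IsCompact X) (g : Fin k → EuclideanSpace ℝ (Fin n) → ℝ)
    {x : EuclideanSpace ℝ (Fin n)} (hx : x ∈ X) :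
    ∃ d, x + d ∈ X ∧ supNorm d ≤ 1 ∧ ∀ ℓ, fderiv ℝ (g ℓ) x d ≤ -omega X g x := by
  set S := {d : EuclideanSpace ℝ (Fin n) | x + d ∈ X ∧ supNorm d ≤ 1} with hS
  have hScomp : IsCompact S :=
    ((Homeomorph.addLeft x).isCompact_preimage.2 hX).inter_right
      (isClosed_le continuous_supNorm continuous_const)
  have hSne : S.Nonempty := ⟨0, by simpa using hx, by simp [supNorm]⟩
  have hcont : Continuous fun d => ⨆ ℓ, fderiv ℝ (g ℓ) x d := by
    rcases isEmpty_or_nonempty (Fin k) with _ | _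
    · simpa using continuous_const
    · simp_rw [← Finset.sup'_univ_eq_ciSup]
      exact Continuous.finset_sup'_apply _ fun ℓ _ => (fderiv ℝ (g ℓ) x).continuous
  obtain ⟨d, hd, hmin⟩ := hScomp.exists_sInf_image_eq hSne hcont.continuousOn
  refine ⟨d, hd.1, hd.2, fun ℓ => ?_⟩
  rw [omega, neg_neg, ← hS, hmin]
  exact le_ciSup (f := fun ℓ => fderiv ℝ (g ℓ) x d) (finite_range _).bddAbove ℓ

/-- Lemma B.1: the Pascoletti–Serafini trial point `x⁺` achieves the sufficient
decrease `Φ_m(x₀) − Φ_m(x⁺) ≥ (r̄/2)·ω_m(x₀)·min{ω_m(x₀)/(c·H), Δ, 1}`. -/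
theorem pascoletti_serafini_sufficient_decrease
    (n k : ℕ) (hk : 1 ≤ k)
    (X : Set (EuclideanSpace ℝ (Fin n)))
    (hXne : X.Nonempty) (hXconv : Convex ℝ X) (hXcomp : IsCompact X)
    (m : Fin k → EuclideanSpace ℝ (Fin n) → ℝ)
    (U : Set (EuclideanSpace ℝ (Fin n))) (hUopen : IsOpen U) (hXU : X ⊆ U)
    (hm : ∀ ℓ, ContDiffOn ℝ 2 (m ℓ) U)
    (x₀ : EuclideanSpace ℝ (Fin n)) (hx₀ : x₀ ∈ X)
    (Δ : ℝ) (hΔ : 0 < Δ)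
    (B : Set (EuclideanSpace ℝ (Fin n))) (hB : B = {y ∈ X | supNorm (y - x₀) ≤ Δ})
    (H : ℝ) (hH : H = ⨆ ℓ : Fin k, ⨆ y : B, frobHess (m ℓ) (y : EuclideanSpace ℝ (Fin n)))
    (c : ℝ) (hc : 0 < c)
    (hcn : ∀ v : EuclideanSpace ℝ (Fin n), ‖v‖ ≤ Real.sqrt c * supNorm v)
    -- `x₀` is not Pareto-critical for the model
    (hωpos : 0 < omega X m x₀)
    -- the local model ideal point `i` and the direction `r = m(x₀) − i ≥ 0`
    (i : Fin k → ℝ) (hi : ∀ ℓ, i ℓ = sInf (m ℓ '' X))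
    (r : Fin k → ℝ) (hr : ∀ ℓ, r ℓ = m ℓ x₀ - i ℓ) (hrpos : ∀ ℓ, 0 ≤ r ℓ)
    (rbar : ℝ) (hrbar0 : 0 < rbar) (hrbar1 : rbar ≤ 1)
    (hrratio : (⨅ ℓ, r ℓ) / (⨆ ℓ, r ℓ) ≥ rbar)
    -- `(τ⁺, x⁺)` minimizes `τ` over the Pascoletti–Serafini feasible set
    (τplus : ℝ) (xplus : EuclideanSpace ℝ (Fin n))
    (hxplusB : xplus ∈ B)
    (hxplusfeas : ∀ ℓ, m ℓ x₀ + τplus * r ℓ - m ℓ xplus ≥ 0)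
    (hmin : ∀ (τ : ℝ) (x : EuclideanSpace ℝ (Fin n)), x ∈ B →
      (∀ ℓ, m ℓ x₀ + τ * r ℓ - m ℓ x ≥ 0) → τplus ≤ τ) :
    (⨆ ℓ, m ℓ x₀) - (⨆ ℓ, m ℓ xplus)
      ≥ (rbar / 2) * omega X m x₀ * min (omega X m x₀ / (c * H)) (min Δ 1) := by
  have : Nonempty (Fin k) := ⟨⟨0, hk⟩⟩
  set ω := omega X m x₀ with hω
  have hBX : B ⊆ X := hB ▸ sep_subset _ _
  have hBcomp : IsCompact B := hB ▸ hXcomp.inter_right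
    (isClosed_le (continuous_supNorm.comp (continuous_id.sub continuous_const)) continuous_const)
  have hfrob : ∀ ℓ, ∀ y ∈ B, frobHess (m ℓ) y ≤ H := fun ℓ y hy => by
    have hbdd : BddAbove (range fun y : B => frobHess (m ℓ) y) := by
      simpa [image_eq_range] using (hBcomp.image_of_continuousOn
        ((continuousOn_frobHess hUopen (hm ℓ)).mono (hBX.trans hXU))).bddAbove
    rw [hH]
    exact (le_ciSup hbdd ⟨y, hy⟩).trans
      (le_ciSup (f := fun ℓ => ⨆ y : B, frobHess (m ℓ) y) (finite_range _).bddAbove ℓ)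
  have hH0 : 0 ≤ H := (Real.sqrt_nonneg _).trans (hfrob ⟨0, hk⟩ xplus hxplusB)
  obtain ⟨d, hdX, hd1, hdω⟩ := exists_direction_fderiv_le_neg_omega hXcomp m hx₀
  have hd_sq : ‖d‖ ^ 2 ≤ c := by
    have h : ‖d‖ ≤ √c := (hcn d).trans (mul_le_of_le_one_right (Real.sqrt_nonneg c) hd1)
    simpa [Real.sq_sqrt hc.le] using pow_le_pow_left₀ (norm_nonneg d) h 2
  set t := min (ω / (c * H)) (min Δ 1)
  have ht0 : 0 ≤ t := le_min (by positivity) (le_min hΔ.le zero_le_one)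
  have htcH : t * (c * H) ≤ ω := by
    rcases hH0.eq_or_lt with h | h
    · simpa [← h] using hωpos.le
    · exact (le_div_iff₀ (by positivity)).1 (min_le_left _ _)
  have hsegB : ∀ s ∈ Icc 0 t, x₀ + s • d ∈ B := fun s hs => by
    have hsm : s ≤ min Δ 1 := hs.2.trans (min_le_right _ _)
    rw [hB]
    refine ⟨hXconv.add_smul_mem hx₀ hdX ⟨hs.1, hsm.trans (min_le_right _ _)⟩, ?_⟩
    rw [add_sub_cancel_left, supNorm_smul, abs_of_nonneg hs.1]
    exact (mul_le_of_le_one_right hs.1 hd1).trans (hsm.trans (min_le_left _ _))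
  have hdecrease : ∀ ℓ, m ℓ (x₀ + t • d) ≤ m ℓ x₀ - ω * t / 2 := fun ℓ => by
    have h1 := le_taylor_of_frobHess_le hUopen (hm ℓ) ht0
      (fun s hs => hXU (hBX (hsegB s hs))) (fun s hs => hfrob ℓ _ (hsegB s hs))
    have h2 := mul_le_mul_of_nonneg_left (hdω ℓ) ht0
    have h3 : H * ‖d‖ ^ 2 * t ^ 2 ≤ H * c * t ^ 2 := by gcongr
    have h4 := mul_le_mul_of_nonneg_left htcH ht0
    rw [← hω] at h2
    nlinarith
  set R := ⨆ ℓ, r ℓ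
  have hrR : ∀ ℓ, r ℓ ≤ R := le_ciSup (finite_range r).bddAbove
  have hRpos : 0 < R := by
    refine ((hrpos ⟨0, hk⟩).trans (hrR _)).lt_of_ne fun h => ?_
    rw [← h, div_zero] at hrratio
    exact hrratio.not_gt hrbar0
  have hrlow : ∀ ℓ, rbar * R ≤ r ℓ := fun ℓ =>
    ((le_div_iff₀ hRpos).1 hrratio).trans (ciInf_le (finite_range r).bddBelow ℓ)
  have hτ : τplus ≤ -(ω * t / 2 / R) := by
    refine hmin _ _ (hsegB t ⟨ht0, le_rfl⟩) fun ℓ => ?_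
    have h : ω * t / 2 / R * r ℓ ≤ ω * t / 2 := by
      rw [div_mul_eq_mul_div, div_le_iff₀ hRpos]
      exact mul_le_mul_of_nonneg_left (hrR ℓ) (by positivity)
    linarith [hdecrease ℓ]
  have hplus : ⨆ ℓ, m ℓ xplus ≤ (⨆ ℓ, m ℓ x₀) - rbar / 2 * ω * t := by
    refine ciSup_le fun ℓ => ?_
    have h1 := le_ciSup (finite_range fun ℓ => m ℓ x₀).bddAbove ℓ
    have h2 := mul_le_mul_of_nonneg_right hτ (hrpos ℓ)
    have h3 : ω * t / 2 / R * (rbar * R) ≤ ω * t / 2 / R * r ℓ :=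
      mul_le_mul_of_nonneg_left (hrlow ℓ) (by positivity)
    have h4 : ω * t / 2 / R * (rbar * R) = rbar / 2 * ω * t := by field_simp
    linarith [hxplusfeas ℓ]
  linarith
end
end
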